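/- Let κ be an infinite regular cardinal. Then there exists a family (b_α : α < κ⁺) indexed by the ordinals below the successor cardinal κ⁺ such that: (i) each b_α is a cofinal subset of κ; (ii) each b_α is contained in the set of successor ordinals below κ that are multiples of 3, i.e. ordinals of the form 3·γ + 3; and (iii) the family is almost disjoint, meaning that for all α ≠ β, the intersection b_α ∩ b_β is bounded below κ. -/

import Mathlib

/-!
The idea is to build `κ⁺` functions `f_α : κ → κ` that pairwise differ from some point on, and to
code the graph of each as a subset of `κ`.

For `α < κ⁺` fix an injection `e_α : α → κ`, and let `f_α ξ` be the least ordinal different from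
all `f_β ξ` with `β < α` and `e_α β < ξ`. Fewer than `κ` values are excluded, so `f_α ξ < κ`
(`sInf_compl_lt_ord`), and for `β < α` the functions `f_α` and `f_β` differ at every `ξ > e_α β`.

Let `p : κ × κ → κ` be injective and let `b_α` consist of the ordinals `3 · p(ξ, f_α ξ) + 3`, which
are below `κ` and determine `ξ` and `f_α ξ`. Each `b_α` has `κ` elements, hence is cofinal. For
`β < α` the set `b_α ∩ b_β` only contains codes of pairs with `ξ ≤ e_α β`; these are fewer than `κ`
many, so they are bounded by regularity of `κ` (`isBoundedIn_of_mk_lt`).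
-/

open Cardinal Ordinal

/-- `C` is unbounded (cofinal) in the ordinal `l`. -/
def IsUnboundedIn (C : Set Ordinal) (l : Ordinal) : Prop :=
  ∀ ξ < l, ∃ η ∈ C, ξ ≤ η

/-- `C ⊆ l` is bounded below `l`: it is contained in some ordinal `ξ < l`. -/
def IsBoundedIn (C : Set Ordinal) (l : Ordinal) : Prop :=
  ∃ ξ < l, C ⊆ Set.Iio ξ

universe u

theorem mk_Iio_ord_lift (κ : Cardinal.{u}) :
    #(Set.Iio κ.ord) = Cardinal.lift.{u + 1} κ := by
  rw [Cardinal.mk_Iio_ordinal, card_ord]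

theorem mk_Iio_lt_lift {κ : Cardinal.{u}} {ξ : Ordinal.{u}} (h : ξ < κ.ord) :
    #(Set.Iio ξ) < Cardinal.lift.{u + 1} κ := by
  rw [Cardinal.mk_Iio_ordinal, Cardinal.lift_lt]
  exact lt_ord.1 h

theorem exists_lt_ord_notMem {κ : Cardinal.{u}} {S : Set Ordinal.{u}}
    (hS : #S < Cardinal.lift.{u + 1} κ) : ∃ x < κ.ord, x ∉ S := by
  by_contra! h
  have h1 : #(Set.Iio κ.ord) ≤ #S := mk_le_mk_of_subset h
  rw [mk_Iio_ord_lift] at h1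
  exact absurd hS h1.not_gt

theorem sInf_compl_lt_ord {κ : Cardinal.{u}} {S : Set Ordinal.{u}}
    (hS : #S < Cardinal.lift.{u + 1} κ) : sInf Sᶜ < κ.ord ∧ sInf Sᶜ ∉ S := by
  obtain ⟨x, hx, hxS⟩ := exists_lt_ord_notMem hS
  exact ⟨(csInf_le' hxS).trans_lt hx, csInf_mem (s := Sᶜ) ⟨x, hxS⟩⟩

theorem isBoundedIn_of_mk_lt {κ : Cardinal.{u}} (hreg : κ.IsRegular) {S : Set Ordinal.{u}}
    (hS : #S < Cardinal.lift.{u + 1} κ) (hlt : ∀ x ∈ S, x < κ.ord) : IsBoundedIn S κ.ord := by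
  refine ⟨sSup ((· + 1) '' S), sSup_add_one_lt_of_lt_cof ?_ hlt, fun x hx => ?_⟩
  · rwa [← lift_cof, hreg.cof_ord]
  · have hb : BddAbove ((· + 1) '' S) := by
      refine ⟨κ.ord, ?_⟩
      rintro _ ⟨y, hy, rfl⟩
      exact Order.add_one_le_of_lt (hlt y hy)
    exact Order.add_one_le_iff.1 (le_csSup hb ⟨x, hx, rfl⟩)

/-- The injection of an ordinal `α < κ⁺` into `κ`, extended to all ordinals by an irrelevant
value. -/
theorem exists_injOn_Iio {κ : Cardinal.{u}} {α : Ordinal.{u}} (hα : α < (Order.succ κ).ord) :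
    ∃ e : Ordinal.{u} → Ordinal.{u},
      (∀ β < α, e β < κ.ord) ∧ Set.InjOn e (Set.Iio α) := by
  have h : #(Set.Iio α) ≤ #(Set.Iio κ.ord) := by
    rw [mk_Iio_ord_lift, Cardinal.mk_Iio_ordinal, Cardinal.lift_le]
    exact Order.lt_succ_iff.1 (lt_ord.1 hα)
  obtain ⟨g⟩ := h
  refine ⟨fun β => if h : β < α then (g ⟨β, h⟩ : Ordinal) else 0, fun β hβ => ?_, ?_⟩
  · simp only [hβ, dite_true]
    exact (g ⟨β, hβ⟩).2
  · intro β hβ γ hγ h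
    rw [Set.mem_Iio] at hβ hγ
    simp only [hβ, hγ, dite_true] at h
    exact congrArg Subtype.val (g.injective (Subtype.ext h))

/-- An injection `κ × κ → κ`, extended to all pairs of ordinals by an irrelevant value. -/
theorem exists_pairing {κ : Cardinal.{u}} (hκ : ℵ₀ ≤ κ) :
    ∃ p : Ordinal.{u} → Ordinal.{u} → Ordinal.{u},
      (∀ x < κ.ord, ∀ y < κ.ord, p x y < κ.ord) ∧
      ∀ x < κ.ord, ∀ y < κ.ord, ∀ x' < κ.ord, ∀ y' < κ.ord, p x y = p x' y' → x = x' ∧ y = y' := by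
  have h : #(Set.Iio κ.ord × Set.Iio κ.ord) ≤ #(Set.Iio κ.ord) := by
    rw [mk_prod, Cardinal.lift_id, mk_Iio_ord_lift, Cardinal.mul_eq_self (by simpa using hκ)]
  obtain ⟨g⟩ := h
  refine ⟨fun x y => if h : x < κ.ord ∧ y < κ.ord then
    (g (⟨x, h.1⟩, ⟨y, h.2⟩) : Ordinal) else 0, fun x hx y hy => ?_, ?_⟩
  · simp only [hx, hy, and_self, dite_true]
    exact (g _).2
  · intro x hx y hy x' hx' y' hy' h
    simp only [hx, hy, hx', hy', and_self, dite_true] at h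
    have hp := Prod.mk.inj (g.injective (Subtype.ext h))
    exact ⟨congrArg Subtype.val hp.1, congrArg Subtype.val hp.2⟩

/-- The functions `f_α`, by recursion on `α`: the value at `ξ` is the least ordinal that is not
`f_β ξ` for any `β < α` with `e α β < ξ`. Here `e` is any system of maps; the useful case is
that each `e α` is injective on the ordinals below `α`. -/
noncomputable def evDiff (e : Ordinal.{u} → Ordinal.{u} → Ordinal.{u}) (α ξ : Ordinal.{u}) :
    Ordinal.{u} :=
  sInf {x | ∃ β, ∃ _ : β < α, e α β < ξ ∧ evDiff e β ξ = x}ᶜ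
termination_by α

/-- Injectivity of `e α` leaves fewer than `κ` excluded values at each `ξ < κ`, so the least
non-excluded one is below `κ`. -/
theorem evDiff_spec {κ : Cardinal.{u}} {e : Ordinal.{u} → Ordinal.{u} → Ordinal.{u}}
    {α ξ : Ordinal.{u}} (he : Set.InjOn (e α) (Set.Iio α)) (hξ : ξ < κ.ord) :
    evDiff e α ξ < κ.ord ∧ ∀ β < α, e α β < ξ → evDiff e β ξ ≠ evDiff e α ξ := by
  have hcard : #{x | ∃ β, ∃ _ : β < α, e α β < ξ ∧ evDiff e β ξ = x} <
      Cardinal.lift.{u + 1} κ := by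
    set T : Set Ordinal.{u} := {β | β < α ∧ e α β < ξ} with hT
    have h1 : {x | ∃ β, ∃ _ : β < α, e α β < ξ ∧ evDiff e β ξ = x} =
        (fun β => evDiff e β ξ) '' T := by
      ext x
      simp only [hT, Set.mem_ofPred_eq, Set.mem_image, exists_prop, and_assoc]
    have h2 : #T ≤ #(Set.Iio ξ) := by
      rw [← mk_image_eq_of_injOn (e α) T (he.mono fun β hβ => hβ.1)]
      apply mk_le_mk_of_subset
      rintro _ ⟨β, hβ, rfl⟩
      exact hβ.2
    rw [h1]
    exact mk_image_le.trans_lt (h2.trans_lt (mk_Iio_lt_lift hξ))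
  have h := sInf_compl_lt_ord hcard
  rw [← evDiff] at h
  exact ⟨h.1, fun β hβ hlt heq => h.2 ⟨β, hβ, hlt, heq⟩⟩

theorem three_mul_add_three_inj {a b : Ordinal.{u}} (h : 3 * a + 3 = 3 * b + 3) : a = b := by
  -- Ordinal addition does not cancel on the right, so `3` is factored out on the left.
  have h' : (3 : Ordinal) * (a + 1) = 3 * (b + 1) := by rw [mul_add_one, mul_add_one, h]
  have h3 : (0 : Ordinal.{u}) < 3 := by norm_num
  exact Order.succ_injective (by simpa using h')

theorem three_mul_add_three_lt {κ : Cardinal.{u}} (hκ : ℵ₀ ≤ κ) {a : Ordinal.{u}}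
    (ha : a < κ.ord) : 3 * a + 3 < κ.ord := by
  have h3 : (3 : Ordinal) < κ.ord :=
    (Ordinal.natCast_lt_omega0 3).trans_le (by simpa using ord_mono hκ)
  exact isPrincipal_add_ord hκ (isPrincipal_mul_ord hκ h3 ha) h3

/-- Let `κ` be an infinite regular cardinal.  Then there is a family
`(b_α : α < κ⁺)` indexed by the ordinals below the successor cardinal `κ⁺`
such that: (i) each `b_α` is a cofinal subset of `κ`; (ii) each `b_α` consists
of successor ordinals below `κ` that are multiples of `3`, i.e. ordinals of the
form `3·γ + 3`; and (iii) the family is almost disjoint: for `α ≠ β`, the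
intersection `b_α ∩ b_β` is bounded below `κ`. -/
theorem almost_disjoint_cofinal_family (κ : Cardinal) (hreg : κ.IsRegular) :
    ∃ b : Ordinal → Set Ordinal,
      (∀ α < (Order.succ κ).ord, IsUnboundedIn (b α) κ.ord) ∧
      (∀ α < (Order.succ κ).ord,
        b α ⊆ {β : Ordinal | β < κ.ord ∧ ∃ γ : Ordinal, β = 3 * γ + 3}) ∧
      (∀ α < (Order.succ κ).ord, ∀ β < (Order.succ κ).ord, α ≠ β →
        IsBoundedIn (b α ∩ b β) κ.ord) := by
  have hκ := hreg.aleph0_le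
  obtain ⟨p, hp, hpinj⟩ := exists_pairing hκ
  have hex : ∀ α : Ordinal, ∃ e : Ordinal → Ordinal, α < (Order.succ κ).ord →
      (∀ β < α, e β < κ.ord) ∧ Set.InjOn e (Set.Iio α) := by
    intro α
    by_cases hα : α < (Order.succ κ).ord
    · obtain ⟨e, he⟩ := exists_injOn_Iio hα
      exact ⟨e, fun _ => he⟩
    · exact ⟨id, fun h => absurd h hα⟩
  choose e he using hex
  set f := evDiff e with hf
  have hflt : ∀ α < (Order.succ κ).ord, ∀ ξ < κ.ord, f α ξ < κ.ord :=
    fun α hα ξ hξ => (evDiff_spec (he α hα).2 hξ).1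
  set c : Ordinal → Ordinal → Ordinal := fun α ξ => 3 * p ξ (f α ξ) + 3 with hc
  have hclt : ∀ α < (Order.succ κ).ord, ∀ ξ < κ.ord, c α ξ < κ.ord :=
    fun α hα ξ hξ => three_mul_add_three_lt hκ (hp _ hξ _ (hflt α hα ξ hξ))
  have hcinj : ∀ α < (Order.succ κ).ord, ∀ β < (Order.succ κ).ord, ∀ ξ < κ.ord, ∀ η < κ.ord,
      c α ξ = c β η → ξ = η ∧ f α ξ = f β η :=
    fun α hα β hβ ξ hξ η hη h => hpinj _ hξ _ (hflt α hα ξ hξ) _ hη _ (hflt β hβ η hη)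
      (three_mul_add_three_inj h)
  have key : ∀ α < (Order.succ κ).ord, ∀ β < α,
      IsBoundedIn (c α '' Set.Iio κ.ord ∩ c β '' Set.Iio κ.ord) κ.ord := by
    intro α hα β hβα
    have hβ := hβα.trans hα
    apply isBoundedIn_of_mk_lt hreg
    -- A common element codes a pair `(η, f α η) = (η, f β η)`, which forces `η ≤ e α β`.
    · have hsub : c α '' Set.Iio κ.ord ∩ c β '' Set.Iio κ.ord ⊆
          c α '' Set.Iio (e α β + 1) := by
        rintro _ ⟨⟨ξ, hξ, rfl⟩, η, hη, h⟩
        obtain ⟨rfl, hval⟩ := hcinj β hβ α hα η hη ξ hξ h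
        refine ⟨η, ?_, rfl⟩
        by_contra hlt
        have hlt' : e α β < η := by simpa using hlt
        exact (evDiff_spec (he α hα).2 hη).2 β hβα hlt' hval
      have he1 : e α β + 1 < κ.ord :=
        (isSuccLimit_ord hκ).add_one_lt ((he α hα).1 β hβα)
      exact (mk_le_mk_of_subset hsub).trans_lt (mk_image_le.trans_lt (mk_Iio_lt_lift he1))
    · rintro _ ⟨⟨ξ, hξ, rfl⟩, -⟩
      exact hclt α hα ξ hξ
  refine ⟨fun α => c α '' Set.Iio κ.ord, fun α hα ξ hξ => ?_, ?_, ?_⟩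
  · by_contra! hbd
    have h1 : #(c α '' Set.Iio κ.ord) ≤ #(Set.Iio ξ) := mk_le_mk_of_subset hbd
    have hinj : Set.InjOn (c α) (Set.Iio κ.ord) :=
      fun x hx y hy h => (hcinj α hα α hα x hx y hy h).1
    rw [mk_image_eq_of_injOn _ _ hinj, mk_Iio_ord_lift] at h1
    exact absurd (mk_Iio_lt_lift hξ) h1.not_gt
  · rintro α hα _ ⟨ξ, hξ, rfl⟩
    exact ⟨hclt α hα ξ hξ, _, rfl⟩
  · intro α hα β hβ hne
    rcases lt_or_gt_of_ne hne with h | h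
    · rw [Set.inter_comm]
      exact key β hβ α h
    · exact key α hα β h
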